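/- Tokenization consistency of token-wise truncation: let s be a string, let 0 ≤ k ≤ m, and suppose φ_k(s) = α ++ μ ++ β for token lists α, μ, β. Then μ = φ_k(π(μ)); that is, the isolated contiguous subsequence μ is exactly the token list obtained by applying the first k merge rules of D to the string π(μ). -/

import Mathlib

/-!
Common BPE formalization preamble.

A token is a (nonempty) string over the alphabet `α`, modeled as `List α`.
A merge rule is a pair of tokens; a dictionary is an ordered list of rules
(earlier rules have strictly higher priority).
-/

namespace BPE

variable {α : Type*} [DecidableEq α]

/-- A token is a string over the alphabet (nonemptiness is imposed by hypotheses). -/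
abbrev Token (α : Type*) := List α

/-- A merge rule is an ordered pair of tokens. -/
abbrev Rule (α : Type*) := Token α × Token α

/-- A dictionary is an ordered list of merge rules; earlier = higher priority. -/
abbrev Dict (α : Type*) := List (Rule α)

/-- Apply a single merge rule to a token list, scanning left to right and replacing
each adjacent occurrence of `r.1` followed by `r.2` by the concatenated token,
resuming the scan after the newly formed token (no overlaps). -/
def applyRule (r : Rule α) : List (Token α) → List (Token α)
  | [] => []
  | [t] => [t]
  | t :: u :: rest =>
      if t = r.1 ∧ u = r.2 then (r.1 ++ r.2) :: applyRule r rest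
      else t :: applyRule r (u :: rest)

/-- `φ₀(s)`: the list of single-character tokens of `s`. -/
def phi0 (s : List α) : List (Token α) := s.map (fun c => [c])

/-- `φ_k(s)`: the token list after applying the first `k` rules of `D` to `s`. -/
def phiK (D : Dict α) (k : ℕ) (s : List α) : List (Token α) :=
  (D.take k).foldl (fun φ r => applyRule r φ) (phi0 s)

/-- The BPE tokenization `𝕋_D(s)`. -/
def tokenize (D : Dict α) (s : List α) : List (Token α) :=
  phiK D D.length s

/-- Detokenization `π`: concatenation of the tokens. -/
def detok (φ : List (Token α)) : List α := φ.flatten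

/-- A dictionary is valid if all rule components are genuine (nonempty) tokens. -/
def ValidDict (D : Dict α) : Prop := ∀ r ∈ D, r.1 ≠ [] ∧ r.2 ≠ []

/-- A token `t` is canonical if `𝕋_D(t) = [t]`. -/
def IsCanonical (D : Dict α) (t : Token α) : Prop := tokenize D t = [t]

/-- The last token `θ(s)`: last element of `𝕋_D(s)` (defaulting to `[]`). -/
def theta (D : Dict α) (s : List α) : Token α := (tokenize D s).getLastD []

/-- `j` (0-based) is the index of the canonical rule of `t`:
`φ_j(t)` has exactly two tokens and `φ_{j+1}(t) = [t]`. -/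
def IsCanonicalRuleIdx (D : Dict α) (t : Token α) (j : ℕ) : Prop :=
  j < D.length ∧ (phiK D j t).length = 2 ∧ phiK D (j + 1) t = [t]

open Classical in
/-- The (0-based) index of the canonical rule of `t` (junk value `0` if none exists). -/
noncomputable def canonIdx (D : Dict α) (t : Token α) : ℕ :=
  if h : ∃ j, IsCanonicalRuleIdx D t j then h.choose else 0

/-- Predecessor `pre(t)`: first token of the two-token stage `φ_{j-1}(t)`. -/
noncomputable def pre (D : Dict α) (t : Token α) : Token α :=
  (phiK D (canonIdx D t) t).headD []

/-- Successor `suc(t)`: second token of the two-token stage `φ_{j-1}(t)`. -/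
noncomputable def suc (D : Dict α) (t : Token α) : Token α :=
  (phiK D (canonIdx D t) t).getLastD []

/-- `InPath D x a` means `a ∈ P(x)`: `a` is obtained from `x` by iterating `suc`,
i.e. `a` lies on the ancestor path of `x` in the Successor Forest. -/
def InPath (D : Dict α) (x a : Token α) : Prop :=
  ∃ n : ℕ, (suc D)^[n] x = a

/-- `s` with the suffix `u` removed. -/
def dropSuffix (s u : List α) : List α := s.take (s.length - u.length)

/-- The Prefix Last-Token Condition of the canonical suffix token `t`
with respect to the string `s`. Atomic tokens satisfy it by definition;
a non-atomic token must satisfy Reachability and Priority dominance. -/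
def PLTC (D : Dict α) (s t : Token α) : Prop :=
  t.length = 1 ∨
    (1 < t.length ∧
      InPath D (theta D (dropSuffix s (suc D t))) (pre D t) ∧
      (theta D (dropSuffix s (suc D t)) ≠ pre D t →
        ∀ u : Token α, 1 < u.length → IsCanonical D u → suc D u = pre D t →
          InPath D (theta D (dropSuffix s (suc D t))) u →
          canonIdx D t < canonIdx D u))


theorem applyRule_split (r : Rule α) (φ : List (Token α)) :
    ∀ x y : List (Token α), applyRule r φ = x ++ y →
      ∃ x' y', φ = x' ++ y' ∧ applyRule r x' = x ∧ applyRule r y' = y := by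
  induction φ using applyRule.induct r with
  | case1 =>
    intro x y h
    simp only [applyRule] at h
    have h' := List.append_eq_nil_iff.mp h.symm
    exact ⟨[], [], rfl, by simp [applyRule, h'.1], by simp [applyRule, h'.2]⟩
  | case2 t =>
    intro x y h
    cases x with
    | nil => exact ⟨[], [t], rfl, by simp [applyRule], by simpa using h⟩
    | cons z x =>
      simp only [applyRule, List.cons_append, List.cons.injEq] at h
      have h' := List.append_eq_nil_iff.mp h.2.symm
      exact ⟨[t], [], rfl, by simp [applyRule, h'.1, h.1], by simp [applyRule, h'.2]⟩
  | case3 t u rest hc ih =>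
    intro x y h
    cases x with
    | nil => exact ⟨[], t :: u :: rest, rfl, by simp [applyRule], by simpa using h⟩
    | cons z x =>
      rw [applyRule, if_pos hc, List.cons_append, List.cons.injEq] at h
      obtain ⟨x', y', h1, h2, h3⟩ := ih x y h.2
      exact ⟨t :: u :: x', y', by simp [h1], by rw [applyRule, if_pos hc, h2, h.1], h3⟩
  | case4 t u rest hc ih =>
    intro x y h
    cases x with
    | nil =>
      exact ⟨[], t :: u :: rest, rfl, by simp [applyRule], by simpa using h⟩
    | cons z x =>
      rw [applyRule, if_neg hc, List.cons_append, List.cons.injEq] at h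
      obtain ⟨x', y', h1, h2, h3⟩ := ih x y h.2
      refine ⟨t :: x', y', by simp [h1], ?_, h3⟩
      cases x' with
      | nil =>
        simp only [applyRule] at h2 ⊢
        rw [← h2, h.1]
      | cons v x' =>
        have hv : u = v := by
          simp only [List.cons_append, List.cons.injEq] at h1
          exact h1.1
        subst hv
        rw [applyRule, if_neg hc, h2, h.1]

theorem applyRule_flatten (r : Rule α) (φ : List (Token α)) :
    (applyRule r φ).flatten = φ.flatten := by
  induction φ using applyRule.induct r with
  | case1 => simp [applyRule]
  | case2 t => simp [applyRule]
  | case3 t u rest hc ih =>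
    rw [applyRule, if_pos hc]
    simp [ih, hc.1, hc.2]
  | case4 t u rest hc ih =>
    rw [applyRule, if_neg hc, List.flatten_cons, ih]
    simp

theorem foldl_consistency (s : List α) (L : List (Rule α)) :
    ∀ a μ b : List (Token α), L.foldl (fun φ r => applyRule r φ) (phi0 s) = a ++ μ ++ b →
      L.foldl (fun φ r => applyRule r φ) (phi0 μ.flatten) = μ := by
  induction L using List.reverseRecOn with
  | nil =>
    intro a μ b h
    simp only [List.foldl_nil] at h ⊢
    have hm : ∀ t ∈ μ, ∃ c, [c] = t := by
      intro t ht
      have : t ∈ phi0 s := by rw [h]; simp [ht]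
      simp only [phi0, List.mem_map] at this
      obtain ⟨c, -, hc⟩ := this
      exact ⟨c, hc⟩
    clear h
    induction μ with
    | nil => simp [phi0]
    | cons t μ ih =>
      obtain ⟨c, rfl⟩ := hm t (by simp)
      have := ih (fun t ht => hm t (by simp [ht]))
      simpa [phi0] using this
  | append_singleton L r ih =>
    intro a μ b h
    simp only [List.foldl_append, List.foldl_cons, List.foldl_nil] at h ⊢
    obtain ⟨x, b', h1, h2, -⟩ := applyRule_split r _ _ _ h
    obtain ⟨a', μ', h3, -, h4⟩ := applyRule_split r _ _ _ h2
    rw [h3] at h1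
    have := ih a' μ' b' h1
    rw [← h4, applyRule_flatten, this]

/-- **Tokenization consistency of token-wise truncation.** If `φ_k(s) = a ++ μ ++ b`,
then `μ` is exactly the token list obtained by applying the first `k` rules of `D`
to the string `π(μ)`. -/
theorem truncation_consistency [Fintype α] (D : Dict α) (hD : ValidDict D)
    (s : List α) (k : ℕ) (hk : k ≤ D.length)
    (a μ b : List (Token α)) (h : phiK D k s = a ++ μ ++ b) :
    μ = phiK D k (detok μ) := by
  exact (foldl_consistency s (D.take k) a μ b h).symm

end BPE
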